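/- There exists an absolute constant C > 0 such that for every finite set P of N points in the real plane ℝ² and every integer r ≥ 2, the number of r-rich lines, i.e. lines of ℝ² containing at least r points of P, is at most C·(N²/r³ + N/r). -/

import Mathlib

/-- A line in `ℝ²` is an affine line, i.e. a set of the form
`{(x, y) : a·x + b·y = c}` with `(a, b) ≠ (0, 0)`. -/
def IsLine (L : Set (ℝ × ℝ)) : Prop :=
  ∃ a b c : ℝ, (a, b) ≠ (0, 0) ∧ L = {p : ℝ × ℝ | a * p.1 + b * p.2 = c}

/-!
The argument is Székely's. After a generic shear the points have distinct abscissae and every line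
through two of them is the graph of a function. Given `M` such `r`-rich lines, join consecutive
points along each of them. The resulting drawing has `N` vertices, at least `M (r - 1) ≥ M r / 2`
edges, and at most `M ^ 2` ordered pairs of crossing edges, because two lines meet at most once.
Either there are fewer than `4 N` edges, so that `M ≤ 8 N / r`, or the crossing lemma
`e ^ 3 ≤ 64 N ^ 2 * crossings` gives `M ≤ 512 N ^ 2 / r ^ 3`.

The crossing lemma follows by sampling the vertices with probability `4 N / e` from
`e ≤ 3 N + crossings`, hence from the bound `e ≤ 3 N` for crossing-free drawings. The latter is
obtained by charging edges to vertices instead of by Euler's formula: the topmost edge leaving a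
vertex to the right is charged to that vertex; any other edge `e` has a next edge `f` above it at
its left endpoint, and is charged to the leftmost vertex of the wedge between `e` and `f`, which
has `f` directly above it or `e` directly below it. Only the incidence and order properties of
pseudolines enter.
-/

open Finset

/-! ### Random sampling -/

section Sampling

variable {R α ι : Type*} [CommRing R] [DecidableEq α]

/-- The left-hand side is the probability that a random subset of `V`, containing each element
independently with probability `p`, contains `T`. -/
lemma sum_Icc_pow_mul_one_sub_pow {T V : Finset α} (hT : T ⊆ V) (p : R) :
    ∑ S ∈ Icc T V, p ^ #S * (1 - p) ^ #(V \ S) = p ^ #T := by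
  have hdisj : ∀ U ∈ (V \ T).powerset, Disjoint T U := fun U hU =>
    disjoint_sdiff.mono_right (mem_powerset.1 hU)
  have hinj : Set.InjOn (T ∪ ·) ((V \ T).powerset : Set (Finset α)) := fun U hU U' hU' h => by
    rw [← union_sdiff_cancel_left (hdisj U hU), ← union_sdiff_cancel_left (hdisj U' hU')]
    exact congrArg (· \ T) h
  calc ∑ S ∈ Icc T V, p ^ #S * (1 - p) ^ #(V \ S)
      = ∑ U ∈ (V \ T).powerset, p ^ #T * (p ^ #U * (1 - p) ^ (#(V \ T) - #U)) := by
        rw [Icc_eq_image_powerset hT, sum_image hinj]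
        refine sum_congr rfl fun U hU => ?_
        rw [card_union_of_disjoint (hdisj U hU), ← sup_eq_union, ← sdiff_sdiff_left,
          card_sdiff_of_subset (mem_powerset.1 hU), pow_add, mul_assoc]
    _ = p ^ #T := by rw [← mul_sum, sum_pow_mul_eq_add_pow, add_sub_cancel, one_pow, mul_one]

/-- The left-hand side is the expected number of `i ∈ I` for which a random subset of `V` contains
`T i`. -/
lemma sum_powerset_pow_mul_card_filter_subset {V : Finset α} {I : Finset ι} {T : ι → Finset α}
    {k : ℕ} (hT : ∀ i ∈ I, T i ⊆ V) (hk : ∀ i ∈ I, #(T i) = k) (p : R) :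
    ∑ S ∈ V.powerset, p ^ #S * (1 - p) ^ #(V \ S) * #{i ∈ I | T i ⊆ S} = #I * p ^ k := by
  calc ∑ S ∈ V.powerset, p ^ #S * (1 - p) ^ #(V \ S) * #{i ∈ I | T i ⊆ S}
      = ∑ S ∈ V.powerset, ∑ i ∈ I, if T i ⊆ S then p ^ #S * (1 - p) ^ #(V \ S) else 0 := by
        refine sum_congr rfl fun S _ => ?_
        rw [← sum_filter, sum_const, nsmul_eq_mul, mul_comm]
    _ = ∑ i ∈ I, ∑ S ∈ Icc (T i) V, p ^ #S * (1 - p) ^ #(V \ S) := by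
        rw [sum_comm]
        simp only [Icc_eq_filter_powerset, sum_filter]
    _ = ∑ _i ∈ I, p ^ k :=
        sum_congr rfl fun i hi => by rw [sum_Icc_pow_mul_one_sub_pow (hT i hi), hk i hi]
    _ = #I * p ^ k := by rw [sum_const, nsmul_eq_mul]

end Sampling

lemma pow_three_le_of_forall_mul_sq_le {n m c : ℝ} (hn : 0 < n) (hnm : 4 * n ≤ m)
    (h : ∀ p ∈ Set.Icc (0 : ℝ) 1, m * p ^ 2 ≤ 3 * (n * p) + c * p ^ 4) :
    m ^ 3 ≤ 64 * n ^ 2 * c := by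
  have hm : 0 < m := by linarith
  obtain ⟨p, hp, hpm⟩ : ∃ p, 0 < p ∧ m * p = 4 * n := ⟨4 * n / m, by positivity, by field_simp⟩
  have hp1 : p ≤ 1 := by
    by_contra! hp1
    nlinarith
  have hcube : n ≤ c * p ^ 3 := by
    refine le_of_mul_le_mul_right ?_ hp
    linear_combination h p ⟨hp.le, hp1⟩ - p * hpm
  refine le_of_mul_le_mul_left ?_ hn
  calc n * m ^ 3 ≤ c * p ^ 3 * m ^ 3 := by gcongr
    _ = c * (m * p) ^ 3 := by ring
    _ = n * (64 * n ^ 2 * c) := by rw [hpm]; ring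

section Drawings

variable {X Y : Type*} [LinearOrder X]

/-! ### Drawings by arcs of pseudolines -/

/-- The part of the graph of `curve` between the abscissae `left` and `right`. -/
@[ext]
structure Arc (X Y : Type*) where
  curve : X → Y
  left : X
  right : X

namespace Arc

/-- The relative interiors of `e` and `f` meet. An arc crosses itself, and so do overlapping arcs of
the same curve. -/
def Crosses (e f : Arc X Y) : Prop :=
  ∃ x ∈ Set.Ioo e.left e.right ∩ Set.Ioo f.left f.right, e.curve x = f.curve x

/-- The abscissae of the endpoints of an arc. -/
def ends (e : Arc X Y) : Finset X := {e.left, e.right}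

end Arc

open Arc

/-- No two distinct arcs of `E` cross. -/
def CrossingFree (E : Finset (Arc X Y)) : Prop :=
  (E : Set (Arc X Y)).Pairwise fun e f => ¬ e.Crosses f

lemma CrossingFree.eq_of_curve_eq {E : Finset (Arc X Y)} (hE : CrossingFree E) {e f : Arc X Y}
    (he : e ∈ E) (hf : f ∈ E) {x : X} (hex : x ∈ Set.Ioo e.left e.right)
    (hfx : x ∈ Set.Ioo f.left f.right) (h : e.curve x = f.curve x) : e = f :=
  hE.eq he hf (not_not.2 ⟨x, ⟨hex, hfx⟩, h⟩)

open scoped Classical in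
/-- The ordered pairs of distinct crossing arcs. -/
noncomputable def crossings (E : Finset (Arc X Y)) : Finset (Arc X Y × Arc X Y) :=
  {q ∈ E.offDiag | q.1.Crosses q.2}

lemma mem_crossings {E : Finset (Arc X Y)} {q : Arc X Y × Arc X Y} :
    q ∈ crossings E ↔ (q.1 ∈ E ∧ q.2 ∈ E ∧ q.1 ≠ q.2) ∧ q.1.Crosses q.2 := by
  classical rw [crossings, mem_filter, mem_offDiag]

variable [LinearOrder Y]

/-- The graphs of `c` and `d` behave like two non-vertical lines in the plane: they coincide or meet
at most once, and they meet wherever their vertical order is reversed. -/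
structure IsPseudolinePair (c d : X → Y) : Prop where
  eq_of_eq_of_eq : ∀ ⦃x x'⦄, x ≠ x' → c x = d x → c x' = d x' → c = d
  exists_eq_of_lt_of_lt : ∀ ⦃x x'⦄, c x < d x → d x' < c x' → ∃ z ∈ Set.uIoo x x', c z = d z

lemma IsPseudolinePair.lt_of_lt {c d : X → Y} (h : IsPseudolinePair c d) {p x x' : X}
    (hp : c p = d p) (hx : p < x) (hx' : p < x') (hlt : c x < d x) : c x' < d x' := by
  have hne : ∀ z, p < z → c z ≠ d z := fun z hz hcd =>
    hlt.ne (congrFun (h.eq_of_eq_of_eq hz.ne hp hcd) x)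
  by_contra! hle
  obtain ⟨z, hz, hcz⟩ := h.exists_eq_of_lt_of_lt hlt (hle.lt_of_ne' (hne x' hx'))
  exact hne z ((lt_min hx hx').trans hz.1) hcz

namespace Arc

/-- The order in which arcs emanate from a common left endpoint: `e` leaves it below `f`. -/
def LeavesBelow (e f : Arc X Y) : Prop :=
  e.left = f.left ∧ ∀ x, e.left < x → e.curve x < f.curve x

/-- `f` is the successor of `e` among the arcs of `E` emanating from the left endpoint of `e`. -/
def IsNextAbove (E : Finset (Arc X Y)) (e f : Arc X Y) : Prop :=
  e.LeavesBelow f ∧ ∀ g ∈ E, e.LeavesBelow g → ¬ g.LeavesBelow f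

/-- `f` is the first arc of `E` met by the open upward vertical ray from `(v, y v)`. -/
def IsFirstAbove (E : Finset (Arc X Y)) (y : X → Y) (v : X) (f : Arc X Y) : Prop :=
  (f ∈ E ∧ v ∈ Set.Ioo f.left f.right ∧ y v < f.curve v) ∧
    ∀ g ∈ E, v ∈ Set.Ioo g.left g.right → y v < g.curve v → f.curve v ≤ g.curve v

/-- `e` is the first arc of `E` met by the open downward vertical ray from `(v, y v)`. -/
def IsFirstBelow (E : Finset (Arc X Y)) (y : X → Y) (v : X) (e : Arc X Y) : Prop :=
  (e ∈ E ∧ v ∈ Set.Ioo e.left e.right ∧ e.curve v < y v) ∧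
    ∀ g ∈ E, v ∈ Set.Ioo g.left g.right → g.curve v < y v → g.curve v ≤ e.curve v

end Arc

lemma CrossingFree.isFirstAbove_unique {E : Finset (Arc X Y)} (hE : CrossingFree E) {y : X → Y}
    {v : X} {f f' : Arc X Y} (h : IsFirstAbove E y v f) (h' : IsFirstAbove E y v f') : f = f' := by
  obtain ⟨⟨hf, hv, hlt⟩, hmin⟩ := h
  obtain ⟨⟨hf', hv', hlt'⟩, hmin'⟩ := h'
  exact hE.eq_of_curve_eq hf hf' hv hv' ((hmin f' hf' hv' hlt').antisymm (hmin' f hf hv hlt))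

lemma CrossingFree.isFirstBelow_unique {E : Finset (Arc X Y)} (hE : CrossingFree E) {y : X → Y}
    {v : X} {e e' : Arc X Y} (h : IsFirstBelow E y v e) (h' : IsFirstBelow E y v e') : e = e' := by
  obtain ⟨⟨he, hv, hlt⟩, hmax⟩ := h
  obtain ⟨⟨he', hv', hlt'⟩, hmax'⟩ := h'
  exact hE.eq_of_curve_eq he he' hv hv' ((hmax' e he hv hlt).antisymm (hmax e' he' hv' hlt'))

/-- A drawing in the plane `X × Y` of a graph, with edges drawn as arcs of pseudolines. The vertices
have distinct abscissae and are encoded by them: the vertex with abscissa `v ∈ V` is the point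
`(v, y v)`. No vertex lies in the interior of an edge, but edges may cross. -/
structure IsDrawing (y : X → Y) (V : Finset X) (E : Finset (Arc X Y)) : Prop where
  pseudoline : ∀ e ∈ E, ∀ f ∈ E, IsPseudolinePair e.curve f.curve
  left_mem : ∀ e ∈ E, e.left ∈ V
  right_mem : ∀ e ∈ E, e.right ∈ V
  left_lt_right : ∀ e ∈ E, e.left < e.right
  curve_left : ∀ e ∈ E, e.curve e.left = y e.left
  curve_right : ∀ e ∈ E, e.curve e.right = y e.right
  curve_ne : ∀ e ∈ E, ∀ v ∈ V, v ∈ Set.Ioo e.left e.right → e.curve v ≠ y v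

variable {y : X → Y} {V : Finset X} {E : Finset (Arc X Y)} {e f : Arc X Y}

namespace IsDrawing

lemma mono (G : IsDrawing y V E) {V' : Finset X} {E' : Finset (Arc X Y)} (hV : V' ⊆ V)
    (hE : E' ⊆ E) (hends : ∀ e ∈ E', e.ends ⊆ V') : IsDrawing y V' E' where
  pseudoline e he f hf := G.pseudoline e (hE he) f (hE hf)
  left_mem e he := hends e he (by simp [ends])
  right_mem e he := hends e he (by simp [ends])
  left_lt_right e he := G.left_lt_right e (hE he)
  curve_left e he := G.curve_left e (hE he)
  curve_right e he := G.curve_right e (hE he)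
  curve_ne e he v hv := G.curve_ne e (hE he) v (hV hv)

lemma ends_subset (G : IsDrawing y V E) (he : e ∈ E) : e.ends ⊆ V :=
  insert_subset (G.left_mem e he) (singleton_subset_iff.2 (G.right_mem e he))

lemma card_ends (G : IsDrawing y V E) (he : e ∈ E) : #e.ends = 2 :=
  card_pair (G.left_lt_right e he).ne

lemma curve_eq_of_mem_ends (G : IsDrawing y V E) (he : e ∈ E) {v : X} (hv : v ∈ e.ends) :
    e.curve v = y v := by
  rcases mem_insert.1 hv with rfl | hv
  · exact G.curve_left e he
  · rw [mem_singleton.1 hv, G.curve_right e he]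

lemma eq_of_curve_eq (G : IsDrawing y V E) (he : e ∈ E) (hf : f ∈ E) (hc : e.curve = f.curve)
    (hef : e.left < f.right) (hfe : f.left < e.right) : e = f := by
  have left_le : ∀ e ∈ E, ∀ f ∈ E, e.curve = f.curve → f.left < e.right → f.left ≤ e.left := by
    intro e he f hf hc hfe
    by_contra! h
    exact G.curve_ne e he f.left (G.left_mem f hf) ⟨h, hfe⟩ (hc ▸ G.curve_left f hf)
  have right_le : ∀ e ∈ E, ∀ f ∈ E, e.curve = f.curve → e.left < f.right →
      e.right ≤ f.right := by
    intro e he f hf hc hef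
    by_contra! h
    exact G.curve_ne e he f.right (G.right_mem f hf) ⟨hef, h⟩ (hc ▸ G.curve_right f hf)
  exact Arc.ext hc ((left_le f hf e he hc.symm hef).antisymm (left_le e he f hf hc hfe))
    ((right_le e he f hf hc hef).antisymm (right_le f hf e he hc.symm hfe))

/-! ### Crossing-free drawings -/

lemma eq_or_leavesBelow_or_leavesBelow (G : IsDrawing y V E) (he : e ∈ E) (hf : f ∈ E)
    (hl : e.left = f.left) : e = f ∨ e.LeavesBelow f ∨ f.LeavesBelow e := by
  have hapex : e.curve e.left = f.curve e.left := by
    rw [G.curve_left e he, hl, G.curve_left f hf]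
  have her := G.left_lt_right e he
  rcases lt_trichotomy (e.curve e.right) (f.curve e.right) with h | h | h
  · exact .inr (.inl ⟨hl, fun x hx => (G.pseudoline e he f hf).lt_of_lt hapex her hx h⟩)
  · exact .inl (G.eq_of_curve_eq he hf ((G.pseudoline e he f hf).eq_of_eq_of_eq her.ne hapex h)
      (hl ▸ G.left_lt_right f hf) (hl ▸ her))
  · exact .inr (.inr ⟨hl.symm, fun x hx =>
      (G.pseudoline f hf e he).lt_of_lt hapex.symm her (hl ▸ hx) h⟩)

lemma curve_le_of_lt (G : IsDrawing y V E) (hE : CrossingFree E) (he : e ∈ E) (hf : f ∈ E)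
    {x x' : X} (hex : x ∈ Set.Icc e.left e.right) (hfx : x ∈ Set.Icc f.left f.right)
    (hex' : x' ∈ Set.Icc e.left e.right) (hfx' : x' ∈ Set.Icc f.left f.right)
    (hlt : e.curve x < f.curve x) : e.curve x' ≤ f.curve x' := by
  by_contra! hgt
  obtain ⟨z, hz, hez⟩ := (G.pseudoline e he f hf).exists_eq_of_lt_of_lt hlt hgt
  have hIoo : ∀ g : Arc X Y, x ∈ Set.Icc g.left g.right → x' ∈ Set.Icc g.left g.right →
      z ∈ Set.Ioo g.left g.right := fun g hx hx' =>
    ⟨(le_min hx.1 hx'.1).trans_lt hz.1, hz.2.trans_le (max_le hx.2 hx'.2)⟩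
  have hef := hE.eq_of_curve_eq he hf (hIoo e hex hex') (hIoo f hfx hfx') hez
  exact hlt.ne (hef ▸ rfl)

/-- The vertices, other than the apex, in the closed region between two arcs `e` and `f` emanating
from a common left endpoint, up to where the first of them ends. -/
def wedge (y : X → Y) (V : Finset X) (e f : Arc X Y) : Finset X :=
  {v ∈ V | v ∈ Set.Ioc e.left (min e.right f.right) ∧ y v ∈ Set.Icc (e.curve v) (f.curve v)}

lemma wedge_nonempty (G : IsDrawing y V E) (he : e ∈ E) (hf : f ∈ E) (hef : e.LeavesBelow f) :
    (wedge y V e f).Nonempty := by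
  obtain ⟨hl, hlt⟩ := hef
  have her := G.left_lt_right e he
  have hfr : e.left < f.right := hl ▸ G.left_lt_right f hf
  rcases le_total e.right f.right with h | h
  · exact ⟨e.right, mem_filter.2 ⟨G.right_mem e he, ⟨her, le_min le_rfl h⟩,
      (G.curve_right e he).le, G.curve_right e he ▸ (hlt _ her).le⟩⟩
  · exact ⟨f.right, mem_filter.2 ⟨G.right_mem f hf, ⟨hfr, le_min h le_rfl⟩,
      G.curve_right f hf ▸ (hlt _ hfr).le, (G.curve_right f hf).ge⟩⟩

/-- An arc `g` strictly between `e` and `f` at `v` would pass over or under the apex and then have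
to cross `f` or `e`, or start at the apex between `e` and `f`, or start in the wedge before `v`. -/
lemma curve_le_of_isLeast_wedge (G : IsDrawing y V E) (hE : CrossingFree E) (he : e ∈ E)
    (hf : f ∈ E) (hef : IsNextAbove E e f) {v : X} (hv : IsLeast (wedge y V e f : Set X) v)
    {g : Arc X Y} (hg : g ∈ E) (hvg : v ∈ Set.Ioo g.left g.right)
    (heg : e.curve v < g.curve v) : f.curve v ≤ g.curve v := by
  obtain ⟨⟨hl, -⟩, hnext⟩ := hef
  obtain ⟨hvW, hmin⟩ := hv
  obtain ⟨-, ⟨hev, hvr⟩, -⟩ := mem_filter.1 hvW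
  obtain ⟨hver, hvfr⟩ := le_min_iff.1 hvr
  have hve : v ∈ Set.Icc e.left e.right := ⟨hev.le, hver⟩
  have hvf : v ∈ Set.Icc f.left f.right := ⟨hl ▸ hev.le, hvfr⟩
  have hvg' := Set.Ioo_subset_Icc_self hvg
  have hpe : e.left ∈ Set.Icc e.left e.right := ⟨le_rfl, hev.le.trans hver⟩
  have hpf : e.left ∈ Set.Icc f.left f.right := ⟨hl.ge, hev.le.trans hvfr⟩
  rcases lt_trichotomy g.left e.left with hge | hge | hge
  · have hpg : e.left ∈ Set.Ioo g.left g.right := ⟨hge, hev.trans hvg.2⟩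
    have hpg' := Set.Ioo_subset_Icc_self hpg
    rcases (G.curve_ne g hg e.left (G.left_mem e he) hpg).lt_or_gt with hside | hside
    · rw [← G.curve_left e he] at hside
      exact absurd heg (G.curve_le_of_lt hE hg he hpg' hpe hvg' hve hside).not_gt
    · rw [hl, ← G.curve_left f hf, ← hl] at hside
      exact G.curve_le_of_lt hE hf hg hpf hpg' hvf hvg' hside
  · have heg' : e.LeavesBelow g := by
      rcases G.eq_or_leavesBelow_or_leavesBelow he hg hge.symm with rfl | h | h
      · exact absurd heg (lt_irrefl _)
      · exact h
      · exact absurd heg (h.2 v hvg.1).asymm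
    rcases G.eq_or_leavesBelow_or_leavesBelow hg hf (hge.trans hl) with rfl | h | h
    · exact le_rfl
    · exact absurd h (hnext g hg heg')
    · exact (h.2 v (hl ▸ hev)).le
  · by_contra! hgf
    have hge' : g.left ∈ Set.Icc e.left e.right := ⟨hge.le, hvg.1.le.trans hver⟩
    have hgf' : g.left ∈ Set.Icc f.left f.right := ⟨hl ▸ hge.le, hvg.1.le.trans hvfr⟩
    have hgg : g.left ∈ Set.Icc g.left g.right := ⟨le_rfl, (G.left_lt_right g hg).le⟩
    have hlow := G.curve_le_of_lt hE he hg hve hvg' hge' hgg heg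
    have hupp := G.curve_le_of_lt hE hg hf hvg' hvf hgg hgf' hgf
    rw [G.curve_left g hg] at hlow hupp
    exact hvg.1.not_ge (hmin (mem_filter.2
      ⟨G.left_mem g hg, ⟨hge, le_min hge'.2 hgf'.2⟩, hlow, hupp⟩))

lemma exists_isFirstAbove_or_isFirstBelow (G : IsDrawing y V E) (hE : CrossingFree E)
    (he : e ∈ E) (hf : f ∈ E) (hef : IsNextAbove E e f) :
    ∃ v ∈ V, IsFirstAbove E y v f ∨ IsFirstBelow E y v e := by
  have hW := G.wedge_nonempty he hf hef.1
  have hleast := isLeast_min' _ hW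
  set v := (wedge y V e f).min' hW
  obtain ⟨hvV, ⟨hev, hvr⟩, hlow, hupp⟩ := mem_filter.1 hleast.1
  obtain ⟨hver, hvfr⟩ := le_min_iff.1 hvr
  have hbetween := fun g hg hvg => G.curve_le_of_isLeast_wedge hE he hf hef hleast (g := g) hg hvg
  refine ⟨v, hvV, ?_⟩
  rcases hupp.lt_or_eq with hlt | heq
  · have hvf : v ≠ f.right := fun h => hlt.ne (h ▸ (G.curve_right f hf).symm)
    exact .inl ⟨⟨hf, ⟨hef.1.1 ▸ hev, hvfr.lt_of_ne hvf⟩, hlt⟩,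
      fun g hg hvg hgv => hbetween g hg hvg (hlow.trans_lt hgv)⟩
  · have hlt : e.curve v < y v := heq ▸ hef.1.2 v hev
    have hve : v ≠ e.right := fun h => hlt.ne (h ▸ G.curve_right e he)
    refine .inr ⟨⟨he, ⟨hev, hver.lt_of_ne hve⟩, hlt⟩, fun g hg hvg hgv => ?_⟩
    by_contra! heg
    exact hgv.not_ge (heq ▸ hbetween g hg hvg heg)

lemma exists_isNextAbove (G : IsDrawing y V E) (he : e ∈ E)
    (h : ∃ g ∈ E, e.LeavesBelow g) : ∃ f ∈ E, IsNextAbove E e f := by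
  classical
  obtain ⟨g, hg, heg⟩ := h
  obtain ⟨f, hf, hmin⟩ := exists_min_image {g ∈ E | e.LeavesBelow g} (fun g => g.curve e.right)
    ⟨g, mem_filter.2 ⟨hg, heg⟩⟩
  obtain ⟨hfE, hef⟩ := mem_filter.1 hf
  refine ⟨f, hfE, hef, fun g hg heg hgf => ?_⟩
  exact (hgf.2 e.right (heg.1 ▸ G.left_lt_right e he)).not_ge (hmin g (mem_filter.2 ⟨hg, heg⟩))

lemma isNextAbove_unique_left (G : IsDrawing y V E) {e' : Arc X Y} (he : e ∈ E) (he' : e' ∈ E)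
    (h : IsNextAbove E e f) (h' : IsNextAbove E e' f) : e = e' := by
  rcases G.eq_or_leavesBelow_or_leavesBelow he he' (h.1.1.trans h'.1.1.symm) with heq | hlt | hlt
  · exact heq
  · exact absurd h'.1 (h.2 e' he' hlt)
  · exact absurd h.1 (h'.2 e he hlt)

open scoped Classical in
lemma card_topmost_le (G : IsDrawing y V E) : #{e ∈ E | ∀ f ∈ E, ¬ e.LeavesBelow f} ≤ #V := by
  refine card_le_card_of_injOn Arc.left (fun e he => G.left_mem e (mem_filter.1 he).1) ?_
  intro e he f hf hl
  obtain ⟨he, hetop⟩ := mem_filter.1 he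
  obtain ⟨hf, hftop⟩ := mem_filter.1 hf
  rcases G.eq_or_leavesBelow_or_leavesBelow he hf hl with h | h | h
  · exact h
  · exact absurd h (hetop f hf)
  · exact absurd h (hftop e he)

theorem card_edges_le_of_crossingFree (G : IsDrawing y V E) (hE : CrossingFree E) :
    #E ≤ 3 * #V := by
  classical
  let topmost := {e ∈ E | ∀ f ∈ E, ¬ e.LeavesBelow f}
  let belowFirstAbove := {e ∈ E | ∃ v ∈ V, ∃ f, IsNextAbove E e f ∧ IsFirstAbove E y v f}
  let firstBelow := {e ∈ E | ∃ v ∈ V, IsFirstBelow E y v e}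
  have hcover : E ⊆ topmost ∪ (belowFirstAbove ∪ firstBelow) := by
    intro e he
    by_cases htop : ∀ f ∈ E, ¬ e.LeavesBelow f
    · exact mem_union_left _ (mem_filter.2 ⟨he, htop⟩)
    · push Not at htop
      obtain ⟨f, hf, hef⟩ := G.exists_isNextAbove he htop
      obtain ⟨v, hv, h | h⟩ := G.exists_isFirstAbove_or_isFirstBelow hE he hf hef
      · exact mem_union_right _ (mem_union_left _ (mem_filter.2 ⟨he, v, hv, f, hef, h⟩))
      · exact mem_union_right _ (mem_union_right _ (mem_filter.2 ⟨he, v, hv, h⟩))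
  have hbelowFirstAbove : #belowFirstAbove ≤ #V := by
    refine card_le_card_of_forall_subsingleton
      (fun e v => ∃ f, IsNextAbove E e f ∧ IsFirstAbove E y v f)
      (fun e he => (mem_filter.1 he).2) ?_
    rintro v - e ⟨he, f, hef, hvf⟩ e' ⟨he', f', hef', hvf'⟩
    obtain rfl := hE.isFirstAbove_unique hvf hvf'
    exact G.isNextAbove_unique_left (mem_filter.1 he).1 (mem_filter.1 he').1 hef hef'
  have hfirstBelow : #firstBelow ≤ #V :=
    card_le_card_of_forall_subsingleton (fun e v => IsFirstBelow E y v e)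
      (fun e he => (mem_filter.1 he).2) fun v _ e he e' he' =>
        hE.isFirstBelow_unique he.2 he'.2
  calc #E ≤ #topmost + (#belowFirstAbove + #firstBelow) :=
        (card_le_card hcover).trans ((card_union_le _ _).trans
          (Nat.add_le_add_left (card_union_le _ _) _))
    _ ≤ #V + (#V + #V) := by gcongr; exact G.card_topmost_le
    _ = 3 * #V := by ring

end IsDrawing

/-! ### The crossing lemma -/

namespace IsDrawing

lemma disjoint_ends_of_crosses (G : IsDrawing y V E) (he : e ∈ E) (hf : f ∈ E) (hne : e ≠ f)
    (h : e.Crosses f) : Disjoint e.ends f.ends := by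
  obtain ⟨x, ⟨hex, hfx⟩, hx⟩ := h
  refine disjoint_left.2 fun v hve hvf => hne ?_
  have hxv : x ≠ v := by
    rcases mem_insert.1 hve with rfl | hv
    · exact hex.1.ne'
    · exact mem_singleton.1 hv ▸ hex.2.ne
  have hv : e.curve v = f.curve v :=
    (G.curve_eq_of_mem_ends he hve).trans (G.curve_eq_of_mem_ends hf hvf).symm
  exact G.eq_of_curve_eq he hf ((G.pseudoline e he f hf).eq_of_eq_of_eq hxv hx hv)
    (hex.1.trans hfx.2) (hfx.1.trans hex.2)

open scoped Classical in
lemma card_crossings_le_card_curves_sq (G : IsDrawing y V E) :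
    #(crossings E) ≤ #(E.image Arc.curve) ^ 2 := by
  rw [sq, ← card_product]
  refine card_le_card_of_injOn (Prod.map Arc.curve Arc.curve) ?_ ?_
  · intro q hq
    obtain ⟨⟨he, hf, -⟩, -⟩ := mem_crossings.1 hq
    exact mem_product.2 ⟨mem_image_of_mem _ he, mem_image_of_mem _ hf⟩
  · intro q hq q' hq' hcurves
    obtain ⟨⟨he, hf, hne⟩, x, ⟨hex, hfx⟩, hx⟩ := mem_crossings.1 hq
    obtain ⟨⟨he', hf', -⟩, x', ⟨hex', hfx'⟩, hx'⟩ := mem_crossings.1 hq'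
    obtain ⟨hce, hcf⟩ := Prod.mk.inj hcurves
    have hxx' : x = x' := by
      by_contra hxx'
      rw [← hce, ← hcf] at hx'
      exact hne (G.eq_of_curve_eq he hf ((G.pseudoline _ he _ hf).eq_of_eq_of_eq hxx' hx hx')
        (hex.1.trans hfx.2) (hfx.1.trans hex.2))
    subst hxx'
    exact Prod.ext (G.eq_of_curve_eq he he' hce (hex.1.trans hex'.2) (hex'.1.trans hex.2))
      (G.eq_of_curve_eq hf hf' hcf (hfx.1.trans hfx'.2) (hfx'.1.trans hfx.2))

lemma card_edges_le_add_card_crossings (G : IsDrawing y V E) :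
    #E ≤ 3 * #V + #(crossings E) := by
  classical
  let F := E \ (crossings E).image Prod.fst
  have hFE : F ⊆ E := sdiff_subset
  have hF : CrossingFree F := fun e he f hf hne h =>
    (mem_sdiff.1 he).2 (mem_image.2 ⟨(e, f), mem_crossings.2 ⟨⟨hFE he, hFE hf, hne⟩, h⟩, rfl⟩)
  calc #E ≤ #F + #((crossings E).image Prod.fst) := card_le_card_sdiff_add_card
    _ ≤ 3 * #V + #(crossings E) := add_le_add
        ((G.mono subset_rfl hFE fun e he => G.ends_subset (hFE he)).card_edges_le_of_crossingFree
          hF) card_image_le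

lemma card_induced_edges_le (G : IsDrawing y V E) {S : Finset X} (hS : S ⊆ V) :
    #{e ∈ E | e.ends ⊆ S} ≤ 3 * #S + #{q ∈ crossings E | q.1.ends ∪ q.2.ends ⊆ S} := by
  have hinduced : IsDrawing y S {e ∈ E | e.ends ⊆ S} :=
    G.mono hS (filter_subset _ _) fun e he => (mem_filter.1 he).2
  refine hinduced.card_edges_le_add_card_crossings.trans
    (Nat.add_le_add_left (card_le_card fun q hq => ?_) _)
  obtain ⟨⟨he, hf, hne⟩, hcross⟩ := mem_crossings.1 hq
  obtain ⟨he, heS⟩ := mem_filter.1 he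
  obtain ⟨hf, hfS⟩ := mem_filter.1 hf
  exact mem_filter.2 ⟨mem_crossings.2 ⟨⟨he, hf, hne⟩, hcross⟩, union_subset heS hfS⟩

lemma card_edges_mul_sq_le (G : IsDrawing y V E) {p : ℝ} (hp : p ∈ Set.Icc (0 : ℝ) 1) :
    #E * p ^ 2 ≤ 3 * (#V * p) + #(crossings E) * p ^ 4 := by
  have hedges := sum_powerset_pow_mul_card_filter_subset (fun e he => G.ends_subset (e := e) he)
    (fun e he => G.card_ends he) p
  have hvertices := sum_powerset_pow_mul_card_filter_subset (V := V) (I := V) (T := singleton)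
    (fun v hv => singleton_subset_iff.2 hv) (fun v _ => card_singleton v) p
  have hcrossings := sum_powerset_pow_mul_card_filter_subset (V := V) (I := crossings E)
    (T := fun q => q.1.ends ∪ q.2.ends) (k := 4)
    (fun q hq => by
      obtain ⟨⟨he, hf, -⟩, -⟩ := mem_crossings.1 hq
      exact union_subset (G.ends_subset he) (G.ends_subset hf))
    (fun q hq => by
      obtain ⟨⟨he, hf, hne⟩, hcross⟩ := mem_crossings.1 hq
      rw [card_union_of_disjoint (G.disjoint_ends_of_crosses he hf hne hcross), G.card_ends he,
        G.card_ends hf]) p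
  rw [pow_one] at hvertices
  rw [← hedges, ← hvertices, ← hcrossings, mul_sum, ← sum_add_distrib]
  refine sum_le_sum fun S hS => ?_
  have hSV := mem_powerset.1 hS
  have hsingletons : {v ∈ V | {v} ⊆ S} = S := by
    simp only [singleton_subset_iff, filter_mem_eq_inter, inter_eq_right.2 hSV]
  rw [hsingletons, mul_left_comm, ← mul_add]
  have hweight : 0 ≤ p ^ #S * (1 - p) ^ #(V \ S) :=
    mul_nonneg (pow_nonneg hp.1 _) (pow_nonneg (sub_nonneg.2 hp.2) _)
  exact mul_le_mul_of_nonneg_left (mod_cast G.card_induced_edges_le hSV) hweight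

theorem crossing_lemma (G : IsDrawing y V E) (h : 4 * #V ≤ #E) :
    #E ^ 3 ≤ 64 * #V ^ 2 * #(crossings E) := by
  rcases E.eq_empty_or_nonempty with rfl | ⟨e, he⟩
  · simp
  have hV : 0 < #V := card_pos.2 ⟨_, G.left_mem e he⟩
  exact_mod_cast pow_three_le_of_forall_mul_sq_le (n := #V) (m := #E) (c := #(crossings E))
    (mod_cast hV) (mod_cast h) fun p hp => G.card_edges_mul_sq_le hp

end IsDrawing

/-! ### Rich pseudolines -/

open scoped Classical in
/-- Székely's drawing: the arcs joining consecutive points `(v, y v)`, `v ∈ V`, along the curves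
of `L`. -/
noncomputable def consecutiveArcs (y : X → Y) (V : Finset X) (L : Finset (X → Y)) :
    Finset (Arc X Y) :=
  {e ∈ (L ×ˢ V ×ˢ V).image fun t => ⟨t.1, t.2.1, t.2.2⟩ |
    e.left < e.right ∧ e.curve e.left = y e.left ∧ e.curve e.right = y e.right ∧
      ∀ v ∈ V, v ∈ Set.Ioo e.left e.right → e.curve v ≠ y v}

lemma mem_consecutiveArcs {y : X → Y} {V : Finset X} {L : Finset (X → Y)} {e : Arc X Y} :
    e ∈ consecutiveArcs y V L ↔ (e.curve ∈ L ∧ e.left ∈ V ∧ e.right ∈ V) ∧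
      e.left < e.right ∧ e.curve e.left = y e.left ∧ e.curve e.right = y e.right ∧
        ∀ v ∈ V, v ∈ Set.Ioo e.left e.right → e.curve v ≠ y v := by
  classical
  rw [consecutiveArcs, mem_filter]
  refine and_congr_left fun _ => ⟨fun h => ?_, fun h => ?_⟩
  · obtain ⟨⟨c, v, w⟩, hcvw, rfl⟩ := mem_image.1 h
    simpa only [mem_product] using hcvw
  · exact mem_image.2 ⟨(e.curve, e.left, e.right), by simpa only [mem_product] using h, rfl⟩

lemma isDrawing_consecutiveArcs (y : X → Y) (V : Finset X) {L : Finset (X → Y)}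
    (hL : ∀ c ∈ L, ∀ d ∈ L, IsPseudolinePair c d) : IsDrawing y V (consecutiveArcs y V L) where
  pseudoline _ he _ hf := hL _ (mem_consecutiveArcs.1 he).1.1 _ (mem_consecutiveArcs.1 hf).1.1
  left_mem _ he := (mem_consecutiveArcs.1 he).1.2.1
  right_mem _ he := (mem_consecutiveArcs.1 he).1.2.2
  left_lt_right _ he := (mem_consecutiveArcs.1 he).2.1
  curve_left _ he := (mem_consecutiveArcs.1 he).2.2.1
  curve_right _ he := (mem_consecutiveArcs.1 he).2.2.2.1
  curve_ne _ he := (mem_consecutiveArcs.1 he).2.2.2.2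

lemma card_crossings_consecutiveArcs_le (y : X → Y) (V : Finset X) {L : Finset (X → Y)}
    (hL : ∀ c ∈ L, ∀ d ∈ L, IsPseudolinePair c d) :
    #(crossings (consecutiveArcs y V L)) ≤ #L ^ 2 := by
  classical
  refine (isDrawing_consecutiveArcs y V hL).card_crossings_le_card_curves_sq.trans ?_
  gcongr
  exact image_subset_iff.2 fun e he => (mem_consecutiveArcs.1 he).1.1

open scoped Classical in
/-- Every point of `c` but the last one is the left endpoint of an arc along `c`. -/
lemma card_incidences_le_card_consecutiveArcs_add_one (y : X → Y) (V : Finset X)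
    {L : Finset (X → Y)} {c : X → Y} (hc : c ∈ L) :
    #{v ∈ V | c v = y v} ≤ #{e ∈ consecutiveArcs y V L | e.curve = c} + 1 := by
  rcases ({v ∈ V | c v = y v} : Finset X).eq_empty_or_nonempty with hempty | hne
  · simp [hempty]
  obtain ⟨z, hz, hlast⟩ := exists_max_image _ id hne
  suffices hleft : ({v ∈ V | c v = y v} : Finset X).erase z ⊆
      ({e ∈ consecutiveArcs y V L | e.curve = c} : Finset (Arc X Y)).image Arc.left by
    rw [← card_erase_add_one hz]
    gcongr
    exact (card_le_card hleft).trans card_image_le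
  intro v hv
  obtain ⟨hvz, hv⟩ := mem_erase.1 hv
  obtain ⟨w, hw, hnext⟩ := exists_min_image {w ∈ V | c w = y w ∧ v < w} id
    ⟨z, mem_filter.2 ⟨(mem_filter.1 hz).1, (mem_filter.1 hz).2, (hlast v hv).lt_of_ne hvz⟩⟩
  obtain ⟨hvV, hcv⟩ := mem_filter.1 hv
  obtain ⟨hwV, hcw, hvw⟩ := mem_filter.1 hw
  refine mem_image.2 ⟨⟨c, v, w⟩, mem_filter.2 ⟨mem_consecutiveArcs.2
    ⟨⟨hc, hvV, hwV⟩, hvw, hcv, hcw, fun u hu huvw hcu => ?_⟩, rfl⟩, rfl⟩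
  exact huvw.2.not_ge (hnext u (mem_filter.2 ⟨hu, hcu, huvw.1⟩))

open scoped Classical in
lemma mul_card_le_card_consecutiveArcs_add_card {y : X → Y} {V : Finset X} {L : Finset (X → Y)}
    {r : ℕ} (hr : ∀ c ∈ L, r ≤ #{v ∈ V | c v = y v}) :
    #L * r ≤ #(consecutiveArcs y V L) + #L :=
  calc #L * r ≤ ∑ c ∈ L, (#{e ∈ consecutiveArcs y V L | e.curve = c} + 1) :=
        card_nsmul_le_sum _ _ _ fun c hc =>
          (hr c hc).trans (card_incidences_le_card_consecutiveArcs_add_one y V hc)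
    _ = #(consecutiveArcs y V L) + #L := by
        rw [sum_add_distrib, sum_const, smul_eq_mul, mul_one, card_eq_sum_card_fiberwise
          (f := Arc.curve) fun e he => (mem_consecutiveArcs.1 he).1.1]

open scoped Classical in
theorem card_rich_pseudolines_le {y : X → Y} {V : Finset X} {L : Finset (X → Y)} {r : ℕ}
    (hr : 2 ≤ r) (hL : ∀ c ∈ L, ∀ d ∈ L, IsPseudolinePair c d)
    (hrich : ∀ c ∈ L, r ≤ #{v ∈ V | c v = y v}) :
    (#L : ℝ) ≤ 512 * ((#V : ℝ) ^ 2 / r ^ 3 + #V / r) := by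
  have hr2 : (2 : ℝ) ≤ r := mod_cast hr
  have hr0 : (0 : ℝ) < r := by linarith
  have hedges : (#L : ℝ) * r ≤ 2 * #(consecutiveArcs y V L) := by
    have : (#L : ℝ) * r ≤ #(consecutiveArcs y V L) + #L :=
      mod_cast mul_card_le_card_consecutiveArcs_add_card hrich
    nlinarith [mul_le_mul_of_nonneg_left hr2 (Nat.cast_nonneg (α := ℝ) #L)]
  rcases lt_or_ge #(consecutiveArcs y V L) (4 * #V) with hfew | hmany
  · have hfew : (#(consecutiveArcs y V L) : ℝ) < 4 * #V := mod_cast hfew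
    have : (#L : ℝ) ≤ 8 * (#V / r) := by
      rw [← mul_div_assoc, le_div_iff₀ hr0]
      linarith
    linarith [show (0 : ℝ) ≤ #V ^ 2 / r ^ 3 by positivity, show (0 : ℝ) ≤ #V / r by positivity]
  · have hcross : (#(consecutiveArcs y V L) : ℝ) ^ 3 ≤ 64 * #V ^ 2 * #L ^ 2 := by
      exact_mod_cast ((isDrawing_consecutiveArcs y V hL).crossing_lemma hmany).trans
        (Nat.mul_le_mul_left _ (card_crossings_consecutiveArcs_le y V hL))
    have : (#L : ℝ) ≤ 512 * (#V ^ 2 / r ^ 3) := by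
      rcases L.eq_empty_or_nonempty with rfl | hne
      · simpa using by positivity
      have hL0 : (0 : ℝ) < #L := mod_cast hne.card_pos
      rw [← mul_div_assoc, le_div_iff₀ (by positivity)]
      refine le_of_mul_le_mul_left ?_ (pow_pos hL0 2)
      calc (#L : ℝ) ^ 2 * (#L * r ^ 3) = (#L * r : ℝ) ^ 3 := by ring
        _ ≤ (2 * #(consecutiveArcs y V L) : ℝ) ^ 3 := by gcongr
        _ = 8 * (#(consecutiveArcs y V L) : ℝ) ^ 3 := by ring
        _ ≤ 8 * (64 * (#V : ℝ) ^ 2 * (#L : ℝ) ^ 2) := by gcongr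
        _ = (#L : ℝ) ^ 2 * (512 * (#V : ℝ) ^ 2) := by ring
    linarith [show (0 : ℝ) ≤ #V / r by positivity]

end Drawings

/-! ### Reduction of lines to pseudolines -/

/-- `L` is an affine line in the coordinate plane over a field `K`; for `K = ℝ` this is `IsLine`. -/
def IsPlaneLine (K : Type*) [Field K] (L : Set (K × K)) : Prop :=
  ∃ a b c : K, (a, b) ≠ (0, 0) ∧ L = {p : K × K | a * p.1 + b * p.2 = c}

section Field

variable {K : Type*} [Field K]

/-- For each pair of points with distinct ordinates there is exactly one `t` for which their
abscissae are not separated. -/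
lemma exists_injOn_shear [Infinite K] (P : Finset (K × K)) :
    ∃ t : K, Set.InjOn (fun p : K × K => p.1 + t * p.2) P := by
  classical
  obtain ⟨t, ht⟩ := Infinite.exists_notMem_finset
    ((P ×ˢ P).image fun q => (q.2.1 - q.1.1) / (q.1.2 - q.2.2))
  refine ⟨t, fun v hv w hw h => ?_⟩
  have hvw : v.2 = w.2 := by
    by_contra hne
    refine ht (mem_image.2 ⟨(v, w), mem_product.2 ⟨hv, hw⟩, ?_⟩)
    rw [div_eq_iff (sub_ne_zero.2 hne)]
    linear_combination -h
  exact Prod.ext (by simpa only [hvw, add_left_inj] using h) hvw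

lemma IsPlaneLine.exists_eq_setOf_shear {L : Set (K × K)} (hL : IsPlaneLine K L) {t : K}
    {p q : K × K} (hp : p ∈ L) (hq : q ∈ L) (hpq : p.1 + t * p.2 ≠ q.1 + t * q.2) :
    ∃ m k : K, L = {p | m * (p.1 + t * p.2) + k = p.2} := by
  obtain ⟨a, b, c, hab, rfl⟩ := hL
  rw [Set.mem_ofPred_eq] at hp hq
  have hb : b - t * a ≠ 0 := by
    intro hb
    have ha : a ≠ 0 := by
      rintro rfl
      exact hab (by simpa using hb)
    exact hpq (mul_left_cancel₀ ha (by linear_combination hp - hq - (p.2 - q.2) * hb))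
  refine ⟨-a / (b - t * a), c / (b - t * a), Set.ext fun u => ?_⟩
  simp only [Set.mem_ofPred_eq]
  rw [div_mul_eq_mul_div, ← add_div, div_eq_iff hb]
  constructor <;> intro h <;> linear_combination -h

end Field

lemma card_filter_image_eq_ncard {α X Y : Type*} [DecidableEq X] [DecidableEq Y] {P : Finset α}
    {φ : α → X} (hφ : Set.InjOn φ P) {h : α → Y} {y : X → Y} (hy : ∀ p ∈ P, y (φ p) = h p)
    (c : X → Y) :
    #{v ∈ P.image φ | c v = y v} = ((P : Set α) ∩ {p | c (φ p) = h p}).ncard := by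
  have himage : ({v ∈ P.image φ | c v = y v} : Finset X) =
      ({p ∈ P | c (φ p) = h p} : Finset α).image φ := by
    rw [filter_image]
    exact congrArg _ (filter_congr fun p hp => by rw [hy p hp])
  rw [himage, card_image_of_injOn (hφ.mono (coe_subset.2 (filter_subset _ _))),
    ← Set.ncard_coe_finset, coe_filter]
  rfl

lemma finite_and_ncard_le_of_forall_finset_card_le {α : Type*} {s : Set α} {b : ℝ}
    (h : ∀ F : Finset α, (F : Set α) ⊆ s → (#F : ℝ) ≤ b) : s.Finite ∧ (s.ncard : ℝ) ≤ b := by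
  have hfin : s.Finite := by
    by_contra hinf
    obtain ⟨n, hn⟩ := exists_nat_gt b
    obtain ⟨F, hFs, rfl⟩ := Set.Infinite.exists_subset_card_eq hinf n
    exact (h F hFs).not_gt hn
  refine ⟨hfin, ?_⟩
  rw [Set.ncard_eq_toFinset_card s hfin]
  exact h _ hfin.coe_toFinset.subset

section OrderedField

variable {K : Type*} [Field K] [LinearOrder K] [IsStrictOrderedRing K]

lemma isPseudolinePair_affine (m k m' k' : K) :
    IsPseudolinePair (fun x => m * x + k) (fun x => m' * x + k') where
  eq_of_eq_of_eq x x' hxx' hx hx' := by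
    have hm : m = m' := by
      refine mul_right_cancel₀ (sub_ne_zero.2 hxx') ?_
      linear_combination hx - hx'
    have hk : k = k' := by linear_combination hx - x * hm
    rw [hm, hk]
  exists_eq_of_lt_of_lt x x' hx hx' := by
    have hne : x ≠ x' := by
      rintro rfl
      exact hx.asymm hx'
    set δ := m' * x + k' - (m * x + k) with hδ
    set δ' := m * x' + k - (m' * x' + k') with hδ'
    have hδ_pos : 0 < δ := sub_pos.2 hx
    have hδ'_pos : 0 < δ' := sub_pos.2 hx'
    refine ⟨δ' / (δ + δ') * x + δ / (δ + δ') * x', ?_, ?_⟩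
    · rw [Set.uIoo, ← openSegment_eq_Ioo' hne]
      exact ⟨_, _, by positivity, by positivity, by field_simp; ring, rfl⟩
    · field_simp
      rw [hδ, hδ']
      ring

lemma card_rich_lines_le {P : Finset (K × K)} {F : Finset (Set (K × K))} {r : ℕ} (hr : 2 ≤ r)
    (hF : ∀ L ∈ F, IsPlaneLine K L ∧ r ≤ ((P : Set (K × K)) ∩ L).ncard) :
    (#F : ℝ) ≤ 512 * ((#P : ℝ) ^ 2 / r ^ 3 + #P / r) := by
  classical
  obtain ⟨t, hinj⟩ := exists_injOn_shear P
  set φ : K × K → K := fun p => p.1 + t * p.2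
  have hgraph : ∀ L ∈ F, ∃ m k : K, L = {p | m * φ p + k = p.2} := by
    intro L hL
    obtain ⟨hline, hrich⟩ := hF L hL
    obtain ⟨p, ⟨hpP, hpL⟩, q, ⟨hqP, hqL⟩, hpq⟩ := Set.one_lt_ncard_iff_nontrivial.1
      (one_lt_two.trans_le (hr.trans hrich))
    exact hline.exists_eq_setOf_shear hpL hqL (hinj.ne hpP hqP hpq)
  choose! m k hL_eq using hgraph
  let curve (L : Set (K × K)) (x : K) : K := m L * x + k L
  let y (x : K) : K := (Function.invFunOn φ P x).2
  have hy : ∀ p ∈ P, y (φ p) = p.2 := fun p hp => congrArg Prod.snd (hinj.leftInvOn_invFunOn hp)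
  have hcurve : Set.InjOn curve F := fun L hL L' hL' h => by
    rw [hL_eq L hL, hL_eq L' hL']
    exact congrArg (fun c : K → K => {p | c (φ p) = p.2}) h
  rw [← card_image_of_injOn hcurve, ← card_image_of_injOn hinj]
  refine card_rich_pseudolines_le (y := y) hr (forall_mem_image.2 fun L _ =>
    forall_mem_image.2 fun L' _ => isPseudolinePair_affine _ _ _ _) (forall_mem_image.2 ?_)
  intro L hL
  rw [card_filter_image_eq_ncard hinj hy]
  exact (hF L hL).2.trans_eq (congrArg (fun S => ((P : Set (K × K)) ∩ S).ncard) (hL_eq L hL))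

theorem rich_lines_bound_general (P : Finset (K × K)) {r : ℕ} (hr : 2 ≤ r) :
    {L : Set (K × K) | IsPlaneLine K L ∧ r ≤ ((P : Set (K × K)) ∩ L).ncard}.Finite ∧
      ({L : Set (K × K) | IsPlaneLine K L ∧ r ≤ ((P : Set (K × K)) ∩ L).ncard}.ncard : ℝ) ≤
        512 * ((#P : ℝ) ^ 2 / (r : ℝ) ^ 3 + (#P : ℝ) / (r : ℝ)) :=
  finite_and_ncard_le_of_forall_finset_card_le fun _ hF => card_rich_lines_le hr fun _ hL => hF hL

end OrderedField

/-- **Szemerédi–Trotter theorem, rich lines form.** There is an absolute constant `C > 0`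
such that for every finite set `P` of `N` points in `ℝ²` and every integer `r ≥ 2`, the
number of `r`-rich lines (lines containing at least `r` points of `P`) is at most
`C·(N²/r³ + N/r)`. -/
theorem rich_lines_bound :
    ∃ C : ℝ, 0 < C ∧
      ∀ (P : Finset (ℝ × ℝ)) (r : ℕ), 2 ≤ r →
        {L : Set (ℝ × ℝ) | IsLine L ∧ r ≤ ((↑P : Set (ℝ × ℝ)) ∩ L).ncard}.Finite ∧
        ({L : Set (ℝ × ℝ) | IsLine L ∧ r ≤ ((↑P : Set (ℝ × ℝ)) ∩ L).ncard}.ncard : ℝ) ≤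
          C * ((P.card : ℝ) ^ 2 / (r : ℝ) ^ 3 + (P.card : ℝ) / (r : ℝ)) :=
  ⟨512, by norm_num, fun P r hr => rich_lines_bound_general P hr⟩
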